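/- arXiv:math/0305124 — 2 statements merged into one kernel-verified Lean document; each statement's English description precedes it below -/
import Mathlib

section
/- If g ∈ GL(7,ℝ) satisfies g*φ = φ, then g is a special orthogonal transformation, i.e. gᵀg = I and det g = 1; moreover g also fixes the 4-form ψ, i.e. g*ψ = ψ. (Thus the stabilizer G₂ of φ is contained in SO(7) and preserves the metric, orientation, and Hodge dual 4-form associated to φ.) -/
open scoped BigOperators Matrix

noncomputable section

namespace G2

/-- The standard basis vector `e i` of `ℝ⁷`. -/
def e (i : Fin 7) : Fin 7 → ℝ := fun j => if j = i then 1 else 0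

/-- The 3-form `e^a ∧ e^b ∧ e^c` (determinant convention), evaluated on `(x, y, z)`. -/
def w3 (a b c : Fin 7) (x y z : Fin 7 → ℝ) : ℝ :=
  x a * (y b * z c - y c * z b) - x b * (y a * z c - y c * z a)
    + x c * (y a * z b - y b * z a)

/-- The 4-form `e^a ∧ e^b ∧ e^c ∧ e^d`, evaluated on `(x, y, z, w)`. -/
def w4 (a b c d : Fin 7) (x y z w : Fin 7 → ℝ) : ℝ :=
  Matrix.det !![x a, x b, x c, x d; y a, y b, y c, y d;
                z a, z b, z c, z d; w a, w b, w c, w d]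

/-- The fundamental `G₂` 3-form
`φ = e^{123}+e^{145}+e^{167}+e^{246}-e^{257}-e^{347}-e^{356}` (indices shifted to start at 0),
as a trilinear alternating function of three vectors. -/
def phi (x y z : Fin 7 → ℝ) : ℝ :=
  w3 0 1 2 x y z + w3 0 3 4 x y z + w3 0 5 6 x y z + w3 1 3 5 x y z
    - w3 1 4 6 x y z - w3 2 3 6 x y z - w3 2 4 5 x y z

/-- The 4-form `ψ = *φ = e^{4567}+e^{2367}+e^{2345}+e^{1357}-e^{1346}-e^{1256}-e^{1247}`
(indices shifted to start at 0), as a function of four vectors. -/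
def psi (x y z w : Fin 7 → ℝ) : ℝ :=
  w4 3 4 5 6 x y z w + w4 1 2 5 6 x y z w + w4 1 2 3 4 x y z w + w4 0 2 4 6 x y z w
    - w4 0 2 3 5 x y z w - w4 0 1 4 5 x y z w - w4 0 1 3 6 x y z w

/-- `ε_{ijk} = φ(e_i, e_j, e_k)`. -/
def eps (i j k : Fin 7) : ℝ := phi (e i) (e j) (e k)

/-- `ε_{ijkl} = ψ(e_i, e_j, e_k, e_l)`. -/
def eps4 (i j k l : Fin 7) : ℝ := psi (e i) (e j) (e k) (e l)

/-- The volume form `e^1 ∧ ⋯ ∧ e^7`, evaluated on a 7-tuple of vectors. -/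
def vol (v : Fin 7 → (Fin 7 → ℝ)) : ℝ := Matrix.det (Matrix.of fun i j => v i j)

/-- The matrix `[v]` with `[v]_{ij} = Σ_k ε_{ijk} v_k`. -/
def bracket (v : Fin 7 → ℝ) : Matrix (Fin 7) (Fin 7) ℝ :=
  Matrix.of fun i j => ∑ k : Fin 7, eps i j k * v k

/-- The vector `⟨A⟩` with `⟨A⟩_i = Σ_{j,k} ε_{ijk} A_{jk}`. -/
def angle (A : Matrix (Fin 7) (Fin 7) ℝ) : Fin 7 → ℝ :=
  fun i => ∑ j : Fin 7, ∑ k : Fin 7, eps i j k * A j k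

/-- Wedge product of two 2-forms (determinant convention), evaluated on four vectors. -/
def wedge22 (A B : (Fin 7 → ℝ) → (Fin 7 → ℝ) → ℝ) (v : Fin 4 → (Fin 7 → ℝ)) : ℝ :=
  (1 / 4 : ℝ) * ∑ σ : Equiv.Perm (Fin 4),
    ((Equiv.Perm.sign σ : ℤ) : ℝ) * (A (v (σ 0)) (v (σ 1)) * B (v (σ 2)) (v (σ 3)))

/-- Wedge product of three 2-forms (determinant convention), evaluated on six vectors. -/
def wedge222 (A B C : (Fin 7 → ℝ) → (Fin 7 → ℝ) → ℝ) (v : Fin 6 → (Fin 7 → ℝ)) : ℝ :=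
  (1 / 8 : ℝ) * ∑ σ : Equiv.Perm (Fin 6),
    ((Equiv.Perm.sign σ : ℤ) : ℝ) *
      (A (v (σ 0)) (v (σ 1)) * B (v (σ 2)) (v (σ 3)) * C (v (σ 4)) (v (σ 5)))

/-- Wedge product of two 2-forms and a 3-form (determinant convention),
evaluated on seven vectors. -/
def wedge223 (A B : (Fin 7 → ℝ) → (Fin 7 → ℝ) → ℝ)
    (C : (Fin 7 → ℝ) → (Fin 7 → ℝ) → (Fin 7 → ℝ) → ℝ)
    (v : Fin 7 → (Fin 7 → ℝ)) : ℝ :=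
  (1 / 24 : ℝ) * ∑ σ : Equiv.Perm (Fin 7),
    ((Equiv.Perm.sign σ : ℤ) : ℝ) *
      (A (v (σ 0)) (v (σ 1)) * B (v (σ 2)) (v (σ 3)) * C (v (σ 4)) (v (σ 5)) (v (σ 6)))

/-- The map `i_φ : S²(ℝ⁷)* → Λ³(ℝ⁷)*`,
`i_φ(h) = Σ_{i,j,k,l} ε_{ikl} h_{ij} e^j ∧ e^k ∧ e^l`, evaluated on `(x, y, z)`. -/
def iphi (h : Fin 7 → Fin 7 → ℝ) (x y z : Fin 7 → ℝ) : ℝ :=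
  ∑ i : Fin 7, ∑ j : Fin 7, ∑ k : Fin 7, ∑ l : Fin 7, eps i k l * h i j * w3 j k l x y z

/-!
Let `M` fix `φ`. As `ψ = *φ`, contracting `vol` with `φ` in three slots yields `6ψ`; moving `M`
across the contraction turns the scaling of `vol` by `Mᵀ` into `ψ(Mᵀ·, Mᵀ·, Mᵀ·, Mᵀ·) = det M · ψ`.
The identities `ψ_{uvab} φ_{yab} = 4 φ_{yuv}` and `φ_{xab} φ_{yab} = 6 ⟨x, y⟩` transport this
scaling first to `φ`, then to the metric, where it reads `det M · MᵀM = 1`. Taking determinants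
gives `(det M)⁹ = 1`, so `det M = 1`, hence `MᵀM = 1`, and the scaling law for `ψ` becomes its
invariance.
-/

section CoordinateForms

variable {R ι m n : Type*} [CommRing R] [Fintype ι] [DecidableEq ι]

/-- The coordinate form `e^{c₀} ∧ e^{c₁} ∧ ⋯` on `Rⁿ` (determinant convention). It presents `φ`
and `ψ` as alternating maps. The indices `c` may repeat, in which case the form vanishes. -/
def coordForm (c : ι → n) : (n → R) [⋀^ι]→ₗ[R] R :=
  Matrix.detRowAlternating.compLinearMap (LinearMap.funLeft R R c)

theorem coordForm_apply (c : ι → n) (x : ι → n → R) :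
    coordForm c x = (Matrix.of fun p q ↦ x p (c q)).det :=
  rfl

variable [DecidableEq n]

theorem coordForm_single (c v : ι → n) :
    coordForm c (fun p ↦ Pi.single (v p) (1 : R)) =
      ∑ σ : Equiv.Perm ι, (Equiv.Perm.sign σ : R) * if c ∘ σ = v then 1 else 0 := by
  rw [coordForm_apply, ← Matrix.det_transpose, Matrix.det_apply']
  simp [Pi.single_apply, Fintype.prod_boole, funext_iff]

variable [Fintype n]

theorem sum_coordForm_mul (c : ι → n) (F : (n → R) [⋀^ι]→ₗ[R] R) :
    ∑ v : ι → n, coordForm c (fun p ↦ Pi.single (v p) 1) * F (fun p ↦ Pi.single (v p) 1) =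
      (Fintype.card ι).factorial * F (fun p ↦ Pi.single (c p) 1) := by
  have F_perm (σ : Equiv.Perm ι) : F (fun p ↦ Pi.single ((c ∘ σ) p) 1) =
      (Equiv.Perm.sign σ : R) * F (fun p ↦ Pi.single (c p) 1) := by
    simpa [Units.smul_def, Function.comp_def] using F.map_perm (fun p ↦ Pi.single (c p) 1) σ
  calc
    _ = ∑ σ : Equiv.Perm ι, (Equiv.Perm.sign σ : R) * F (fun p ↦ Pi.single ((c ∘ σ) p) 1) := by
      simp_rw [coordForm_single, Finset.sum_mul]
      rw [Finset.sum_comm]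
      simp only [mul_assoc, ite_mul, one_mul, zero_mul, ← Finset.mul_sum, Finset.sum_ite_eq,
        Finset.mem_univ, if_true]
    _ = ∑ _σ : Equiv.Perm ι, F (fun p ↦ Pi.single (c p) 1) := by
      refine Finset.sum_congr rfl fun σ _ ↦ ?_
      rw [F_perm, ← mul_assoc, ← Int.cast_mul, Int.units_coe_mul_self, Int.cast_one, one_mul]
    _ = _ := by simp [Fintype.card_perm]

variable [Fintype m] [DecidableEq m]

theorem map_mulVec_single_eq_sum (F : MultilinearMap R (fun _ : ι ↦ m → R) R) (M : Matrix m n R)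
    (v : ι → n) :
    F (fun p ↦ M *ᵥ Pi.single (v p) 1) =
      ∑ u : ι → m, (∏ p, M (u p) (v p)) * F (fun p ↦ Pi.single (u p) 1) := by
  have mulVec_single (j : n) : M *ᵥ Pi.single j 1 = ∑ i, M i j • Pi.single i (1 : R) := by
    rw [Matrix.mulVec_single_one]
    exact pi_eq_sum_univ' (M.col j)
  simp only [mulVec_single, F.map_sum, F.map_smul_univ, smul_eq_mul]

theorem sum_mul_map_mulVec_single (K : MultilinearMap R (fun _ : ι ↦ n → R) R)
    (G : MultilinearMap R (fun _ : ι ↦ m → R) R) (M : Matrix m n R) :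
    ∑ v : ι → n, K (fun p ↦ Pi.single (v p) 1) * G (fun p ↦ M *ᵥ Pi.single (v p) 1) =
      ∑ u : ι → m, K (fun p ↦ Mᵀ *ᵥ Pi.single (u p) 1) * G (fun p ↦ Pi.single (u p) 1) := by
  simp_rw [map_mulVec_single_eq_sum, Finset.mul_sum, Finset.sum_mul, Matrix.transpose_apply]
  rw [Finset.sum_comm]
  exact Finset.sum_congr rfl fun u _ ↦ Finset.sum_congr rfl fun v _ ↦ by ring

end CoordinateForms

theorem sum_fin_two_arrow {α A : Type*} [Fintype α] [AddCommMonoid A] (f : (Fin 2 → α) → A) :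
    ∑ v, f v = ∑ a, ∑ b, f ![a, b] := by
  rw [← (finTwoArrowEquiv α).symm.sum_comp, Fintype.sum_prod_type]
  rfl

theorem det_of_last_row_eq_single {R : Type*} [CommRing R] {k : ℕ}
    {A : Matrix (Fin (k + 1)) (Fin (k + 1)) R} {j : Fin (k + 1)}
    (hA : A (Fin.last k) = Pi.single j 1) :
    A.det = (-1) ^ (k + j : ℕ) * (A.submatrix Fin.castSucc j.succAbove).det := by
  rw [Matrix.det_succ_row A (Fin.last k), Finset.sum_eq_single j]
  · simp [hA, Fin.succAbove_last]
  · intro i _ hi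
    simp [hA, hi]
  · simp

theorem e_eq_single (i : Fin 7) : e i = Pi.single i 1 := by
  ext j
  simp [e, Pi.single_apply]

theorem w3_eq_coordForm (a b c : Fin 7) (v : Fin 3 → Fin 7 → ℝ) :
    w3 a b c (v 0) (v 1) (v 2) = coordForm ![a, b, c] v := by
  simp only [w3, coordForm_apply, Matrix.det_fin_three, Matrix.of_apply, Matrix.cons_val]
  ring

theorem w4_eq_coordForm (a b c d : Fin 7) (v : Fin 4 → Fin 7 → ℝ) :
    w4 a b c d (v 0) (v 1) (v 2) (v 3) = coordForm ![a, b, c, d] v := by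
  rw [w4, coordForm_apply]
  congr 1
  ext p q
  fin_cases p <;> fin_cases q <;> rfl

/-- `φ` as an alternating map. -/
def phiForm : (Fin 7 → ℝ) [⋀^Fin 3]→ₗ[ℝ] ℝ :=
  coordForm ![0, 1, 2] + coordForm ![0, 3, 4] + coordForm ![0, 5, 6] + coordForm ![1, 3, 5]
    - coordForm ![1, 4, 6] - coordForm ![2, 3, 6] - coordForm ![2, 4, 5]

/-- `ψ` as an alternating map. -/
def psiForm : (Fin 7 → ℝ) [⋀^Fin 4]→ₗ[ℝ] ℝ :=
  coordForm ![3, 4, 5, 6] + coordForm ![1, 2, 5, 6] + coordForm ![1, 2, 3, 4]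
    + coordForm ![0, 2, 4, 6] - coordForm ![0, 2, 3, 5] - coordForm ![0, 1, 4, 5]
    - coordForm ![0, 1, 3, 6]

/-- `vol` as an alternating map. -/
def volForm : (Fin 7 → ℝ) [⋀^Fin 7]→ₗ[ℝ] ℝ :=
  Matrix.detRowAlternating

/-- The interior product `vol(x, y, z, w, ·, ·, ·)`, a 3-form like `φ`. -/
def volContraction (x y z w : Fin 7 → ℝ) : (Fin 7 → ℝ) [⋀^Fin 3]→ₗ[ℝ] ℝ :=
  (((volForm.curryLeft x).curryLeft y).curryLeft z).curryLeft w

theorem phiForm_apply (v : Fin 3 → Fin 7 → ℝ) : phiForm v = phi (v 0) (v 1) (v 2) := by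
  simp only [phi, w3_eq_coordForm]
  rfl

theorem psiForm_apply (v : Fin 4 → Fin 7 → ℝ) : psiForm v = psi (v 0) (v 1) (v 2) (v 3) := by
  simp only [psi, w4_eq_coordForm]
  rfl

theorem volForm_apply (v : Fin 7 → Fin 7 → ℝ) : volForm v = vol v := by
  rw [vol, Matrix.det, volForm]
  exact congrArg _ rfl

theorem volContraction_apply (x y z w : Fin 7 → ℝ) (v : Fin 3 → Fin 7 → ℝ) :
    volContraction x y z w v = vol ![x, y, z, w, v 0, v 1, v 2] := by
  have curryLeft_four (F : (Fin 7 → ℝ) [⋀^Fin 7]→ₗ[ℝ] ℝ) :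
      (((F.curryLeft x).curryLeft y).curryLeft z).curryLeft w v =
        F ![x, y, z, w, v 0, v 1, v 2] := by
    refine congrArg F ?_
    ext p
    fin_cases p <;> rfl
  rw [volContraction, curryLeft_four, volForm_apply]

theorem vol_mulVec (M : Matrix (Fin 7) (Fin 7) ℝ) (v : Fin 7 → Fin 7 → ℝ) :
    vol (fun i ↦ M *ᵥ v i) = M.det * vol v := by
  have mulVec_rows : (Matrix.of fun i j ↦ (M *ᵥ v i) j) = (Matrix.of fun i j ↦ v i j) * Mᵀ := by
    ext i j
    simp [Matrix.mul_apply, Matrix.mulVec, dotProduct, mul_comm]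
  rw [vol, vol, mulVec_rows, Matrix.det_mul, Matrix.det_transpose, mul_comm]

theorem volContraction_mulVec_e (M : Matrix (Fin 7) (Fin 7) ℝ) (x y z w : Fin 7 → ℝ)
    (v : Fin 3 → Fin 7) :
    volContraction (M *ᵥ x) (M *ᵥ y) (M *ᵥ z) (M *ᵥ w) (fun p ↦ M *ᵥ e (v p)) =
      M.det * volContraction x y z w (fun p ↦ e (v p)) := by
  rw [volContraction_apply, volContraction_apply, ← vol_mulVec]
  congr 1
  ext p
  fin_cases p <;> rfl

-- The `succAbove`s make the indices distinct without hypotheses: for `a < b < c` they are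
-- `a, b, c`, and `k` enumerates the other four in increasing order.
theorem vol_e_e_e (a : Fin 5) (b : Fin 6) (c : Fin 7) (x y z w : Fin 7 → ℝ) :
    vol ![x, y, z, w, e (c.succAbove (b.succAbove a)), e (c.succAbove b), e c] =
      (-1) ^ (a + b + c + 1 : ℕ) *
        let k := c.succAbove ∘ b.succAbove ∘ a.succAbove
        w4 (k 0) (k 1) (k 2) (k 3) x y z w := by
  have row_five : e (c.succAbove b) ∘ c.succAbove = Pi.single b 1 := by
    ext j
    simp [e, Pi.single_apply]
  have row_four : e (c.succAbove (b.succAbove a)) ∘ c.succAbove ∘ b.succAbove = Pi.single a 1 := by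
    ext j
    simp [e, Pi.single_apply]
  have sign : (-1 : ℝ) ^ (6 + c + (5 + b) + (4 + a) : ℕ) = (-1) ^ (a + b + c + 1 : ℕ) := by
    rw [show 6 + (c : ℕ) + (5 + b) + (4 + a) = a + b + c + 1 + 2 * 7 by ring, pow_add, pow_mul]
    norm_num
  rw [vol, det_of_last_row_eq_single (k := 6) (e_eq_single c),
    det_of_last_row_eq_single (k := 5) row_five, det_of_last_row_eq_single (k := 4) row_four, w4,
    ← mul_assoc, ← mul_assoc, ← pow_add, ← pow_add, sign]
  congr 2
  ext p q
  fin_cases p <;> fin_cases q <;> rfl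

theorem sum_phiForm_mul (F : (Fin 7 → ℝ) [⋀^Fin 3]→ₗ[ℝ] ℝ) :
    ∑ v : Fin 3 → Fin 7, phiForm (fun p ↦ e (v p)) * F (fun p ↦ e (v p)) =
      6 * (F ![e 0, e 1, e 2] + F ![e 0, e 3, e 4] + F ![e 0, e 5, e 6] + F ![e 1, e 3, e 5]
        - F ![e 1, e 4, e 6] - F ![e 2, e 3, e 6] - F ![e 2, e 4, e 5]) := by
  have sum_coordForm (i j k : Fin 7) :
      ∑ v : Fin 3 → Fin 7, coordForm ![i, j, k] (fun p ↦ e (v p)) * F (fun p ↦ e (v p)) =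
        6 * F ![e i, e j, e k] := by
    have basis_triple : (fun p ↦ e (![i, j, k] p)) = ![e i, e j, e k] := by
      ext p
      fin_cases p <;> rfl
    have total := sum_coordForm_mul ![i, j, k] F
    simp only [← e_eq_single, basis_triple, Fintype.card_fin] at total
    exact total.trans (by norm_num [Nat.factorial])
  simp only [phiForm, AlternatingMap.add_apply, AlternatingMap.sub_apply, add_mul, sub_mul,
    Finset.sum_add_distrib, Finset.sum_sub_distrib, sum_coordForm]
  ring

theorem sum_phiForm_mul_volContraction (x y z w : Fin 7 → ℝ) :
    ∑ v : Fin 3 → Fin 7, phiForm (fun p ↦ e (v p)) * volContraction x y z w (fun p ↦ e (v p)) =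
      6 * psi x y z w := by
  have vol_eq (a : Fin 5) (b : Fin 6) (c : Fin 7) := vol_e_e_e a b c x y z w
  have vol_012 : vol ![x, y, z, w, e 0, e 1, e 2] = w4 3 4 5 6 x y z w :=
    (vol_eq 0 1 2).trans (by norm_num; rfl)
  have vol_034 : vol ![x, y, z, w, e 0, e 3, e 4] = w4 1 2 5 6 x y z w :=
    (vol_eq 0 3 4).trans (by norm_num; rfl)
  have vol_056 : vol ![x, y, z, w, e 0, e 5, e 6] = w4 1 2 3 4 x y z w :=
    (vol_eq 0 5 6).trans (by norm_num; rfl)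
  have vol_135 : vol ![x, y, z, w, e 1, e 3, e 5] = w4 0 2 4 6 x y z w :=
    (vol_eq 1 3 5).trans (by norm_num; rfl)
  have vol_146 : vol ![x, y, z, w, e 1, e 4, e 6] = w4 0 2 3 5 x y z w :=
    (vol_eq 1 4 6).trans (by norm_num; rfl)
  have vol_236 : vol ![x, y, z, w, e 2, e 3, e 6] = w4 0 1 4 5 x y z w :=
    (vol_eq 2 3 6).trans (by norm_num; rfl)
  have vol_245 : vol ![x, y, z, w, e 2, e 4, e 5] = w4 0 1 3 6 x y z w :=
    (vol_eq 2 4 5).trans (by norm_num; rfl)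
  rw [sum_phiForm_mul, psi]
  simp only [volContraction_apply, Matrix.cons_val, vol_012, vol_034, vol_056, vol_135, vol_146,
    vol_236, vol_245]

theorem phi_swap (x y z : Fin 7 → ℝ) : phi x y z = -phi x z y := by
  simp only [phi, w3]
  ring

theorem w4_eq_w3 (a b c d : Fin 7) (x y z w : Fin 7 → ℝ) :
    w4 a b c d x y z w =
      x a * w3 b c d y z w - x b * w3 a c d y z w + x c * w3 a b d y z w
        - x d * w3 a b c y z w := by
  simp only [w4, w3, Matrix.det_succ_row_zero (n := 3), Fin.sum_univ_four, Matrix.det_fin_three]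
  simp [Fin.succAbove]
  ring

theorem sum_w4_mul (i j k l : Fin 7) (u v : Fin 7 → ℝ) {A : Fin 7 → Fin 7 → ℝ}
    (hA : ∀ a b, A a b = -A b a) :
    ∑ a, ∑ b, w4 i j k l u v (e a) (e b) * A a b =
      2 * ((u i * v j - u j * v i) * A k l - (u i * v k - u k * v i) * A j l
        + (u i * v l - u l * v i) * A j k + (u j * v k - u k * v j) * A i l
        - (u j * v l - u l * v j) * A i k + (u k * v l - u l * v k) * A i j) := by
  simp only [w4_eq_w3, w3, e, mul_add, mul_sub, add_mul, sub_mul, Finset.sum_add_distrib,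
    Finset.sum_sub_distrib, ite_mul, mul_ite, mul_zero, zero_mul, mul_one, Finset.sum_ite_eq,
    Finset.mem_univ, if_true]
  rw [hA j i, hA k i, hA l i, hA k j, hA l j, hA l k]
  ring

theorem sum_phi_mul_phi (x y : Fin 7 → ℝ) :
    ∑ a, ∑ b, phi x (e a) (e b) * phi y (e a) (e b) = 6 * (x ⬝ᵥ y) := by
  simp [phi, w3, e, Fin.sum_univ_seven, dotProduct]
  ring

theorem sum_psi_mul_phi (u v y : Fin 7 → ℝ) :
    ∑ a, ∑ b, psi u v (e a) (e b) * phi y (e a) (e b) = 4 * phi y u v := by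
  simp only [psi, add_mul, sub_mul, Finset.sum_add_distrib, Finset.sum_sub_distrib,
    sum_w4_mul _ _ _ _ _ _ (fun a b ↦ phi_swap y (e a) (e b))]
  simp [phi, w3, e]
  ring

theorem sum_mul_map_mulVec_e (K G : (Fin 7 → ℝ) [⋀^Fin 2]→ₗ[ℝ] ℝ) (M : Matrix (Fin 7) (Fin 7) ℝ) :
    ∑ a, ∑ b, K ![e a, e b] * G ![M *ᵥ e a, M *ᵥ e b] =
      ∑ a, ∑ b, K ![Mᵀ *ᵥ e a, Mᵀ *ᵥ e b] * G ![e a, e b] := by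
  have comp_pair (f : Fin 7 → Fin 7 → ℝ) (a b : Fin 7) : (fun p ↦ f (![a, b] p)) = ![f a, f b] := by
    ext p
    fin_cases p <;> rfl
  have transfer := sum_mul_map_mulVec_single K.toMultilinearMap G.toMultilinearMap M
  rw [sum_fin_two_arrow, sum_fin_two_arrow] at transfer
  simpa only [AlternatingMap.coe_multilinearMap, ← e_eq_single, comp_pair e,
    comp_pair (M *ᵥ e ·), comp_pair (Mᵀ *ᵥ e ·)] using transfer

/-- `M` fixes the 3-form `φ`, i.e. `M*φ = φ`. -/
def FixesPhi (M : Matrix (Fin 7) (Fin 7) ℝ) : Prop :=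
  ∀ x y z, phi (M *ᵥ x) (M *ᵥ y) (M *ᵥ z) = phi x y z

namespace FixesPhi

variable {M : Matrix (Fin 7) (Fin 7) ℝ}

theorem sum_phiForm_mul_transpose (hM : FixesPhi M) (F : (Fin 7 → ℝ) [⋀^Fin 3]→ₗ[ℝ] ℝ) :
    ∑ v : Fin 3 → Fin 7, phiForm (fun p ↦ e (v p)) * F (fun p ↦ Mᵀ *ᵥ e (v p)) =
      ∑ v : Fin 3 → Fin 7, phiForm (fun p ↦ e (v p)) * F (fun p ↦ e (v p)) := by
  have phiForm_mulVec (v : Fin 3 → Fin 7 → ℝ) : phiForm (fun p ↦ M *ᵥ v p) = phiForm v := by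
    simp only [phiForm_apply, hM (v 0) (v 1) (v 2)]
  have transfer := sum_mul_map_mulVec_single F.toMultilinearMap phiForm.toMultilinearMap M
  simp only [AlternatingMap.coe_multilinearMap, phiForm_mulVec, ← e_eq_single] at transfer
  simpa only [mul_comm] using transfer.symm

theorem psi_transpose_mulVec (hM : FixesPhi M) (x y z w : Fin 7 → ℝ) :
    psi (Mᵀ *ᵥ x) (Mᵀ *ᵥ y) (Mᵀ *ᵥ z) (Mᵀ *ᵥ w) = M.det * psi x y z w := by
  refine mul_left_cancel₀ (show (6 : ℝ) ≠ 0 by norm_num) ?_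
  rw [← sum_phiForm_mul_volContraction, ← hM.sum_phiForm_mul_transpose, mul_left_comm,
    ← sum_phiForm_mul_volContraction, Finset.mul_sum]
  refine Finset.sum_congr rfl fun v _ ↦ ?_
  rw [volContraction_mulVec_e, Matrix.det_transpose, mul_left_comm]

theorem phi_transpose_mulVec (hM : FixesPhi M) (y u v : Fin 7 → ℝ) :
    phi y (Mᵀ *ᵥ u) (Mᵀ *ᵥ v) = M.det * phi (M *ᵥ y) u v := by
  have := calc
    4 * phi y (Mᵀ *ᵥ u) (Mᵀ *ᵥ v)
      = ∑ a, ∑ b, psi (Mᵀ *ᵥ u) (Mᵀ *ᵥ v) (e a) (e b) *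
          phi (M *ᵥ y) (M *ᵥ e a) (M *ᵥ e b) := by
        simp only [← sum_psi_mul_phi, hM y]
    _ = ∑ a, ∑ b, psi (Mᵀ *ᵥ u) (Mᵀ *ᵥ v) (Mᵀ *ᵥ e a) (Mᵀ *ᵥ e b) *
          phi (M *ᵥ y) (e a) (e b) := by
        simpa only [AlternatingMap.curryLeft_apply_apply, psiForm_apply, phiForm_apply,
          Matrix.cons_val] using
          sum_mul_map_mulVec_e ((psiForm.curryLeft (Mᵀ *ᵥ u)).curryLeft (Mᵀ *ᵥ v))
            (phiForm.curryLeft (M *ᵥ y)) M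
    _ = M.det * (4 * phi (M *ᵥ y) u v) := by
        simp only [hM.psi_transpose_mulVec, mul_assoc, ← Finset.mul_sum, sum_psi_mul_phi]
  linarith

theorem dotProduct_eq (hM : FixesPhi M) (x y : Fin 7 → ℝ) :
    x ⬝ᵥ y = M.det * (M *ᵥ x ⬝ᵥ M *ᵥ y) := by
  have := calc
    6 * (x ⬝ᵥ y)
      = ∑ a, ∑ b, phi y (e a) (e b) * phi (M *ᵥ x) (M *ᵥ e a) (M *ᵥ e b) := by
        simp only [dotProduct_comm x y, ← sum_phi_mul_phi, hM x]
    _ = ∑ a, ∑ b, phi y (Mᵀ *ᵥ e a) (Mᵀ *ᵥ e b) * phi (M *ᵥ x) (e a) (e b) := by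
        simpa only [AlternatingMap.curryLeft_apply_apply, phiForm_apply, Matrix.cons_val] using
          sum_mul_map_mulVec_e (phiForm.curryLeft y) (phiForm.curryLeft (M *ᵥ x)) M
    _ = M.det * (6 * (M *ᵥ x ⬝ᵥ M *ᵥ y)) := by
        simp only [hM.phi_transpose_mulVec, mul_assoc, ← Finset.mul_sum, sum_phi_mul_phi,
          dotProduct_comm]
  linarith

theorem det_smul_transpose_mul_self (hM : FixesPhi M) : M.det • (Mᵀ * M) = 1 := by
  ext i j
  have := hM.dotProduct_eq (Pi.single i 1) (Pi.single j 1)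
  simpa [Matrix.mul_apply, dotProduct, Matrix.one_apply, Pi.single_apply, eq_comm] using this.symm

theorem det_eq_one (hM : FixesPhi M) : M.det = 1 := by
  have det_pow_nine : M.det ^ 9 = 1 := by
    have := congrArg Matrix.det hM.det_smul_transpose_mul_self
    rw [Matrix.det_smul, Matrix.det_mul, Matrix.det_transpose, Matrix.det_one,
      Fintype.card_fin] at this
    linear_combination this
  have odd_nine : Odd 9 := by decide
  exact odd_nine.pow_injective (det_pow_nine.trans (one_pow 9).symm)

theorem transpose_mul_self (hM : FixesPhi M) : Mᵀ * M = 1 := by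
  simpa only [hM.det_eq_one, one_smul] using hM.det_smul_transpose_mul_self

theorem psi_mulVec (hM : FixesPhi M) (x y z w : Fin 7 → ℝ) :
    psi (M *ᵥ x) (M *ᵥ y) (M *ᵥ z) (M *ᵥ w) = psi x y z w := by
  have := hM.psi_transpose_mulVec (M *ᵥ x) (M *ᵥ y) (M *ᵥ z) (M *ᵥ w)
  simpa only [Matrix.mulVec_mulVec, hM.transpose_mul_self, Matrix.one_mulVec, hM.det_eq_one,
    one_mul] using this.symm

end FixesPhi

/-- if `g ∈ GL(7,ℝ)` fixes `φ` (i.e. `g*φ = φ`), then `gᵀg = 1`, `det g = 1`,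
and `g` also fixes the 4-form `ψ` (i.e. `g*ψ = ψ`). -/
theorem stabilizer_in_SO7 (g : GL (Fin 7) ℝ)
    (hg : ∀ x y z : Fin 7 → ℝ,
      phi ((g : Matrix (Fin 7) (Fin 7) ℝ).mulVec x)
          ((g : Matrix (Fin 7) (Fin 7) ℝ).mulVec y)
          ((g : Matrix (Fin 7) (Fin 7) ℝ).mulVec z) = phi x y z) :
    (g : Matrix (Fin 7) (Fin 7) ℝ)ᵀ * (g : Matrix (Fin 7) (Fin 7) ℝ) = 1 ∧
    (g : Matrix (Fin 7) (Fin 7) ℝ).det = 1 ∧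
    (∀ x y z w : Fin 7 → ℝ,
      psi ((g : Matrix (Fin 7) (Fin 7) ℝ).mulVec x)
          ((g : Matrix (Fin 7) (Fin 7) ℝ).mulVec y)
          ((g : Matrix (Fin 7) (Fin 7) ℝ).mulVec z)
          ((g : Matrix (Fin 7) (Fin 7) ℝ).mulVec w) = psi x y z w) := by
  have fixes : FixesPhi (g : Matrix (Fin 7) (Fin 7) ℝ) := hg
  exact ⟨fixes.transpose_mul_self, fixes.det_eq_one, fixes.psi_mulVec⟩

end G2

end
end

section
/- The bilinear map × is a vector cross product compatible with the standard inner product: for all u, v ∈ ℝ⁷ one has ⟨u×v, u⟩ = 0, ⟨u×v, v⟩ = 0, and |u×v|² = |u|²|v|² − ⟨u,v⟩². -/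
open scoped BigOperators Matrix

noncomputable section

namespace G2

/-- The vector cross product on `ℝ⁷` defined by `⟨u × v, w⟩ = φ(u,v,w)`, i.e.
`(u × v)ᵢ = φ(u, v, eᵢ)`. -/
def cross (u v : Fin 7 → ℝ) : Fin 7 → ℝ := fun i => phi u v (e i)

/-!
Orthogonality holds because `φ` is alternating. For the norm, write `p i j` and `q i j` for the
Plücker coordinates of `u ∧ v` and `x ∧ y`. Each pair of indices occurs in exactly one of the seven
terms of `φ`, so every coordinate of `u × v` is a signed sum of three `p i j`, and the `p i j`
involved are different for different coordinates. In `⟨u × v, x × y⟩` the diagonal products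
`p i j * q i j` therefore add up to the Gram determinant, by the Binet–Cauchy identity, while the
mixed ones are the Laplace expansion of `ψ(u, v, x, y)`. The latter vanishes for `x = u`, since
`ψ` is alternating.
-/

theorem sum_sum_lt_add_swap {ι M : Type*} [Fintype ι] [LinearOrder ι] [AddCommMonoid M]
    (g : ι → ι → M) (hg : ∀ i, g i i = 0) :
    ∑ i, ∑ j with i < j, (g i j + g j i) = ∑ i, ∑ j, g i j := by
  have split (i j : ι) : g i j = (if i < j then g i j else 0) + if j < i then g i j else 0 := by
    rcases lt_trichotomy i j with h | rfl | h
    · simp only [h, h.not_gt, if_true, if_false, add_zero]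
    · simp only [lt_irrefl, if_false, add_zero, hg]
    · simp only [h, h.not_gt, if_true, if_false, zero_add]
  calc ∑ i, ∑ j with i < j, (g i j + g j i)
      = ∑ i, ∑ j, (if i < j then g i j else 0) + ∑ i, ∑ j, if i < j then g j i else 0 := by
        simp only [Finset.sum_filter, Finset.sum_add_distrib]
    _ = ∑ i, ∑ j, (if i < j then g i j else 0) + ∑ i, ∑ j, if j < i then g i j else 0 := by
        rw [Finset.sum_comm (f := fun i j => if i < j then g j i else 0)]
    _ = ∑ i, ∑ j, g i j := by
        simp only [← Finset.sum_add_distrib, ← split]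

section PluckerCoordinates

variable {ι R : Type*} [CommRing R]

/-- The Plücker coordinate `(e^i ∧ e^j)(u, v)`, the minor on columns `i`, `j` of the matrix with
rows `u` and `v`. -/
def plucker (u v : ι → R) (i j : ι) : R := u i * v j - u j * v i

theorem sum_plucker_mul_plucker [Fintype ι] [LinearOrder ι] (u v x y : ι → R) :
    ∑ i, ∑ j with i < j, plucker u v i j * plucker x y i j =
      (u ⬝ᵥ x) * (v ⬝ᵥ y) - (u ⬝ᵥ y) * (v ⬝ᵥ x) := by
  let g (i j : ι) : R := u i * x i * (v j * y j) - u i * y i * (v j * x j)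
  calc ∑ i, ∑ j with i < j, plucker u v i j * plucker x y i j
      = ∑ i, ∑ j with i < j, (g i j + g j i) := by
        congr! 2 with i _ j
        simp only [plucker, g]
        ring
    _ = ∑ i, ∑ j, g i j := sum_sum_lt_add_swap g fun i => by simp only [g]; ring
    _ = (u ⬝ᵥ x) * (v ⬝ᵥ y) - (u ⬝ᵥ y) * (v ⬝ᵥ x) := by
        simp only [g, dotProduct, Finset.sum_mul_sum, Finset.sum_sub_distrib]

theorem det_fin_four_eq_plucker (A : Matrix (Fin 4) (Fin 4) R) :
    A.det =
      plucker (A 0) (A 1) 0 1 * plucker (A 2) (A 3) 2 3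
        - plucker (A 0) (A 1) 0 2 * plucker (A 2) (A 3) 1 3
        + plucker (A 0) (A 1) 0 3 * plucker (A 2) (A 3) 1 2
        + plucker (A 0) (A 1) 1 2 * plucker (A 2) (A 3) 0 3
        - plucker (A 0) (A 1) 1 3 * plucker (A 2) (A 3) 0 2
        + plucker (A 0) (A 1) 2 3 * plucker (A 2) (A 3) 0 1 := by
  simp only [Matrix.det_succ_row_zero (n := 3), Matrix.det_fin_three, Matrix.submatrix_apply,
    Fin.sum_univ_four, Fin.succAbove, Fin.reduceSucc, Fin.reduceCastSucc, Fin.reduceLT, ↓reduceIte,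
    Fin.coe_ofNat_eq_mod, plucker]
  ring

end PluckerCoordinates

theorem w3_eq_plucker (a b c : Fin 7) (x y z : Fin 7 → ℝ) :
    w3 a b c x y z = plucker x y b c * z a - plucker x y a c * z b + plucker x y a b * z c := by
  simp only [w3, plucker]
  ring

theorem w4_eq_plucker (a b c d : Fin 7) (x y z w : Fin 7 → ℝ) :
    w4 a b c d x y z w =
      plucker x y a b * plucker z w c d - plucker x y a c * plucker z w b d
        + plucker x y a d * plucker z w b c + plucker x y b c * plucker z w a d
        - plucker x y b d * plucker z w a c + plucker x y c d * plucker z w a b :=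
  det_fin_four_eq_plucker _

theorem w3_self_first_third (a b c : Fin 7) (x y : Fin 7 → ℝ) : w3 a b c x y x = 0 := by
  simp only [w3]
  ring

theorem w3_self_second_third (a b c : Fin 7) (x y : Fin 7 → ℝ) : w3 a b c x y y = 0 := by
  simp only [w3]
  ring

theorem phi_self_first_third (x y : Fin 7 → ℝ) : phi x y x = 0 := by
  simp only [phi, w3_self_first_third, add_zero, sub_zero]

theorem phi_self_second_third (x y : Fin 7 → ℝ) : phi x y y = 0 := by
  simp only [phi, w3_self_second_third, add_zero, sub_zero]

theorem w4_self_first_third (a b c d : Fin 7) (x y z : Fin 7 → ℝ) : w4 a b c d x y x z = 0 :=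
  Matrix.det_zero_of_row_eq (i := 0) (j := 2) (by decide) rfl

theorem psi_self_first_third (x y z : Fin 7 → ℝ) : psi x y x z = 0 := by
  simp only [psi, w4_self_first_third, add_zero, sub_zero]

theorem sum_w3_e_mul (a b c : Fin 7) (x y z : Fin 7 → ℝ) :
    ∑ i, w3 a b c x y (e i) * z i = w3 a b c x y z := by
  simp only [w3_eq_plucker, e, add_mul, sub_mul, mul_assoc, ite_mul, one_mul, zero_mul,
    Finset.sum_add_distrib, Finset.sum_sub_distrib, ← Finset.mul_sum, Finset.sum_ite_eq,
    Finset.mem_univ, if_true]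

theorem cross_dotProduct (u v w : Fin 7 → ℝ) : cross u v ⬝ᵥ w = phi u v w := by
  simp only [dotProduct, cross, phi, add_mul, sub_mul, Finset.sum_add_distrib,
    Finset.sum_sub_distrib, sum_w3_e_mul]

theorem cross_eq_plucker (u v : Fin 7 → ℝ) :
    cross u v =
      ![plucker u v 1 2 + plucker u v 3 4 + plucker u v 5 6,
        -plucker u v 0 2 + plucker u v 3 5 - plucker u v 4 6,
        plucker u v 0 1 - plucker u v 3 6 - plucker u v 4 5,
        -plucker u v 0 4 - plucker u v 1 5 + plucker u v 2 6,
        plucker u v 0 3 + plucker u v 1 6 + plucker u v 2 5,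
        -plucker u v 0 6 + plucker u v 1 3 - plucker u v 2 4,
        plucker u v 0 5 - plucker u v 1 4 - plucker u v 2 3] := by
  ext i
  fin_cases i <;>
    · simp only [cross, phi, w3_eq_plucker, e, Fin.reduceEq, Fin.reduceFinMk,
        Fin.zero_eta, Fin.mk_one, ↓reduceIte, Matrix.cons_val]
      ring

theorem cross_dotProduct_cross (u v x y : Fin 7 → ℝ) :
    cross u v ⬝ᵥ cross x y =
      (u ⬝ᵥ x) * (v ⬝ᵥ y) - (u ⬝ᵥ y) * (v ⬝ᵥ x) + psi u v x y := by
  have diagonal_add_mixed : cross u v ⬝ᵥ cross x y =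
      ∑ i, ∑ j with i < j, plucker u v i j * plucker x y i j + psi u v x y := by
    simp only [dotProduct, cross_eq_plucker, psi, w4_eq_plucker, Finset.sum_filter,
      Fin.sum_univ_seven, Fin.reduceLT, ↓reduceIte, Matrix.cons_val]
    ring
  rw [diagonal_add_mixed, sum_plucker_mul_plucker]

theorem cross_dotProduct_cross_self (u v : Fin 7 → ℝ) :
    cross u v ⬝ᵥ cross u v = (u ⬝ᵥ u) * (v ⬝ᵥ v) - (u ⬝ᵥ v) ^ 2 := by
  rw [cross_dotProduct_cross, psi_self_first_third, add_zero, dotProduct_comm v u, ← sq]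

/-- `×` is a vector cross product compatible with the standard inner product:
`⟨u×v, u⟩ = 0`, `⟨u×v, v⟩ = 0`, and `|u×v|² = |u|²|v|² − ⟨u,v⟩²`. -/
theorem cross_is_vector_cross_product (u v : Fin 7 → ℝ) :
    (∑ i : Fin 7, cross u v i * u i = 0) ∧
    (∑ i : Fin 7, cross u v i * v i = 0) ∧
    (∑ i : Fin 7, cross u v i * cross u v i
      = (∑ i : Fin 7, u i * u i) * (∑ i : Fin 7, v i * v i)
        - (∑ i : Fin 7, u i * v i) ^ 2) :=
  ⟨(cross_dotProduct u v u).trans (phi_self_first_third u v),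
    (cross_dotProduct u v v).trans (phi_self_second_third u v),
    cross_dotProduct_cross_self u v⟩

end G2

end
end
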